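/- For every N ≥ 3 that is either odd or divisible by 4, there exists ε > 0 (depending on N) such that for all real u with 1−ε < u < 1, with v = √(1−u²), u₀ = u, v₀ = v, u₁ = v, v₁ = −u, there is no probability distribution q on {0,1}^N × {cw, acw} (nonnegative, summing to 1) satisfying: (i) for all (i₁,…,i_N) ∈ {0,1}^N: q(i₁,…,i_N, cw) + q(i₁,…,i_N, acw) = ½·(∏_{n=1}^N u_{i_n} + ∏_{n=1}^N v_{i_n})²; and (ii) for every position n ∈ {1,…,N} and every b ∈ {0,1}: the marginal probability of the event {i_n = b, t = cw} equals v_b²/2 and the marginal probability of {i_n = b, t = acw} equals u_b²/2. -/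

import Mathlib

noncomputable def uco (u : ℝ) : Fin 2 → ℝ := ![u, Real.sqrt (1 - u ^ 2)]
noncomputable def vco (u : ℝ) : Fin 2 → ℝ := ![Real.sqrt (1 - u ^ 2), -u]

/-!
Let `A` and `B` be the two products of coefficients of a string and `q` the anticlockwise part of a
solution. The marginals of `q` are those of `A ^ 2 / 2`, so `q - A ^ 2 / 2` is orthogonal to every
affine function `τ - k` of the number `k` of ones. For a string with `k < τ` use
`q - A ^ 2 / 2 ≤ A * B + B ^ 2 / 2`, and for one with `k > τ` use `q - A ^ 2 / 2 ≥ -A ^ 2 / 2`. If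
`|τ - N / 2| < 1`, the squares occurring here are at most `v ^ (N + 1)`, while the cross terms
`A * B = (u * v) ^ N * (-1) ^ k` add up to `(-1) ^ (τ - 1) * (N - 2).choose (τ - 1) * (u * v) ^ N`.
An even such `τ` exists exactly when `N` is odd or divisible by `4`; the cross terms are then
negative of order `v ^ N`, which the squares cannot compensate once `v` is small.
-/

open Finset Topology

section ProductSpace

variable {ι κ R : Type*} [Fintype ι] [DecidableEq ι] [Fintype κ] [DecidableEq κ]

theorem sum_prod_apply_filter_apply_eq [CommSemiring R] {p : κ → R} (hp : ∑ b, p b = 1)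
    (n : ι) (b : κ) :
    ∑ x : ι → κ with x n = b, ∏ m, p (x m) = p b := by
  have hcyl : ({x : ι → κ | x n = b} : Finset (ι → κ)) =
      Fintype.piFinset (Function.update (fun _ => univ) n ({b} : Finset κ)) := by
    rw [Fintype.piFinset_update_singleton_eq_filter_piFinset_eq (fun _ => univ) n (mem_univ b),
      Fintype.piFinset_univ]
  rw [hcyl, ← prod_univ_sum, prod_eq_single n]
  · simp
  · intro m _ hm
    rw [Function.update_of_ne hm, hp]
  · simp

theorem sum_mul_apply_eq_zero_of_marginal [NonUnitalNonAssocSemiring R] {r : (ι → κ) → R} {n : ι}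
    (hr : ∀ b, ∑ x with x n = b, r x = 0) (g : κ → R) : ∑ x, r x * g (x n) = 0 := by
  rw [← sum_fiberwise univ (fun x => x n)]
  refine sum_eq_zero fun b _ => ?_
  calc ∑ x with x n = b, r x * g (x n) = ∑ x with x n = b, r x * g b :=
        sum_congr rfl fun x hx => by rw [(mem_filter.1 hx).2]
    _ = 0 := by rw [← sum_mul, hr, zero_mul]

theorem sum_mul_sub_hammingNorm_eq_zero_of_marginal [Ring R] [Nonempty ι] [Zero κ]
    {r : (ι → κ) → R} (hr : ∀ n b, ∑ x with x n = b, r x = 0) (c : R) :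
    ∑ x, r x * (c - hammingNorm x) = 0 := by
  obtain ⟨n₀⟩ := ‹Nonempty ι›
  have hconst : ∑ x, r x * c = 0 := sum_mul_apply_eq_zero_of_marginal (hr n₀) fun _ => c
  have hnorm : ∑ x, r x * (hammingNorm x : R) = 0 := by
    simp only [hammingNorm, card_filter, Nat.cast_sum, mul_sum]
    rw [sum_comm]
    exact sum_eq_zero fun n _ =>
      sum_mul_apply_eq_zero_of_marginal (hr n) fun b => ((if b ≠ 0 then 1 else 0 : ℕ) : R)
  simp only [mul_sub, sum_sub_distrib, hconst, hnorm, sub_zero]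

end ProductSpace

section BinaryStrings

variable {ι M R : Type*} [Fintype ι]

theorem prod_apply_eq_pow_hammingNorm [CommMonoid M] (f : Fin 2 → M) (x : ι → Fin 2) :
    ∏ n, f (x n) = f 0 ^ (Fintype.card ι - hammingNorm x) * f 1 ^ hammingNorm x := by
  have hf (b : Fin 2) : f b = if b ≠ 0 then f 1 else f 0 := by fin_cases b <;> rfl
  classical
  have hzeros : #{n | ¬ x n ≠ 0} = Fintype.card ι - hammingNorm x := by
    rw [← compl_filter, card_compl, hammingNorm]
  calc ∏ n, f (x n) = ∏ n, if x n ≠ 0 then f 1 else f 0 := prod_congr rfl fun n _ => hf (x n)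
    _ = _ := by rw [prod_ite, prod_const, prod_const, hzeros, mul_comm, hammingNorm]

theorem prod_mul_prod_eq_pow_mul_neg_one_pow [CommRing R] (u v : R) (x : ι → Fin 2) :
    (∏ n, ![u, v] (x n)) * ∏ n, ![v, -u] (x n) =
      (u * v) ^ Fintype.card ι * (-1) ^ hammingNorm x := by
  have hx : hammingNorm x ≤ Fintype.card ι := hammingNorm_le_card_fintype
  rw [← prod_mul_distrib, prod_apply_eq_pow_hammingNorm fun b => ![u, v] b * ![v, -u] b,
    ← pow_sub_mul_pow (u * v) hx, mul_assoc, ← mul_pow]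
  simp [mul_comm u v]

theorem sum_apply_hammingNorm [DecidableEq ι] [AddCommMonoid M] (f : ℕ → M) :
    ∑ x : ι → Fin 2, f (hammingNorm x) =
      ∑ k ∈ range (Fintype.card ι + 1), (Fintype.card ι).choose k • f k := by
  rw [← card_univ, ← sum_powerset_apply_card]
  refine sum_bij' (fun x _ => ({n | x n ≠ 0} : Finset ι)) (fun s _ n => if n ∈ s then 1 else 0)
    (by simp) (by simp) (fun x _ => ?_) (by simp) (by simp [hammingNorm])
  ext n
  obtain h | h : x n = 0 ∨ x n = 1 := by lia
  all_goals simp [h]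

end BinaryStrings

-- Second differences: summing the alternating partial sums of a row of Pascal's triangle twice
-- moves up two rows.
theorem alternating_sum_range_choose_mul_sub (n θ : ℕ) :
    ∑ k ∈ range (θ + 1), (-1 : ℤ) ^ k * (n + 2).choose k * (θ + 1 - k) = (-1) ^ θ * n.choose θ := by
  induction θ with
  | zero => simp
  | succ θ ih =>
    calc _ = ∑ k ∈ range (θ + 1 + 1), (-1 : ℤ) ^ k * (n + 2).choose k * (θ + 1 - k) +
          ∑ k ∈ range (θ + 1 + 1), (-1 : ℤ) ^ k * (n + 2).choose k := by
          rw [← sum_add_distrib]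
          exact sum_congr rfl fun k _ => by push_cast; ring
      _ = (-1) ^ θ * n.choose θ + (-1) ^ (θ + 1) * (n + 1).choose (θ + 1) := by
          rw [sum_range_succ, ih, Int.alternating_sum_range_choose_eq_choose]
          push_cast
          ring
      _ = (-1) ^ (θ + 1) * n.choose (θ + 1) := by
          rw [Nat.choose_succ_succ]
          push_cast
          ring

theorem sum_neg_one_pow_hammingNorm_mul_tsub {ι : Type*} [Fintype ι] [DecidableEq ι]
    (hι : 2 ≤ Fintype.card ι) (θ : ℕ) :
    ∑ x : ι → Fin 2, (-1 : ℤ) ^ hammingNorm x * ((θ + 1 - hammingNorm x : ℕ) : ℤ) =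
      (-1) ^ θ * (Fintype.card ι - 2).choose θ := by
  rw [sum_apply_hammingNorm fun k => (-1 : ℤ) ^ k * ((θ + 1 - k : ℕ) : ℤ),
    ← alternating_sum_range_choose_mul_sub, Nat.sub_add_cancel hι]
  refine sum_congr_of_eq_on_inter (fun k _ hk => ?_) (fun k _ hk => ?_) fun k _ hk => ?_
  · rw [mem_range, not_lt] at hk
    simp [Nat.sub_eq_zero_of_le hk]
  · rw [mem_range, not_lt] at hk
    simp [Nat.choose_eq_zero_of_lt hk]
  · rw [Nat.cast_sub (mem_range.1 hk).le, nsmul_eq_mul]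
    push_cast
    ring

section Interference

variable {K : Type*} [Field K] [LinearOrder K] [IsStrictOrderedRing K]

-- The truncated differences are the positive and negative parts of `τ - k`.
theorem sub_half_sq_mul_sub_le {a b q : K} (hq₀ : 0 ≤ q) (hq : q ≤ 1 / 2 * (a + b) ^ 2)
    (τ k : ℕ) :
    (q - 1 / 2 * a ^ 2) * ((τ : K) - k) ≤
      a * b * (τ - k : ℕ) + (b ^ 2 * (τ - k : ℕ) + a ^ 2 * (k - τ : ℕ)) / 2 := by
  rcases le_total k τ with h | h
  · have hupper : q - 1 / 2 * a ^ 2 ≤ a * b + b ^ 2 / 2 := by linarith [add_sq a b]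
    rw [Nat.sub_eq_zero_of_le h, ← Nat.cast_sub h, Nat.cast_zero]
    calc _ ≤ (a * b + b ^ 2 / 2) * (τ - k : ℕ) := by gcongr
      _ = _ := by ring
  · have hlower : 1 / 2 * a ^ 2 - q ≤ a ^ 2 / 2 := by linarith
    rw [Nat.sub_eq_zero_of_le h, Nat.cast_zero]
    calc _ = (1 / 2 * a ^ 2 - q) * (k - τ : ℕ) := by rw [Nat.cast_sub h]; ring
      _ ≤ a ^ 2 / 2 * (k - τ : ℕ) := by gcongr
      _ = _ := by ring

theorem sq_pow_mul_pow_le_pow {u v : K} (hu : u ^ 2 ≤ 1) (hv₀ : 0 ≤ v) (hv₁ : v ≤ 1) {m k : ℕ}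
    (hm : m ≤ 2 * k) (l : ℕ) : (u ^ l * v ^ k) ^ 2 ≤ v ^ m :=
  calc (u ^ l * v ^ k) ^ 2 = (u ^ 2) ^ l * v ^ (2 * k) := by ring
    _ ≤ 1 * v ^ m := by
      gcongr ?_ * ?_
      · exact pow_le_one₀ (sq_nonneg u) hu
      · exact pow_le_pow_of_le_one hv₀ hv₁ hm
    _ = v ^ m := one_mul _

theorem sq_mul_tsub_add_sq_mul_tsub_le {u v : K} (hu : u ^ 2 ≤ 1) (hv₀ : 0 ≤ v) (hv₁ : v ≤ 1)
    {N τ k : ℕ} (hk : k ≤ N) (hlo : N ≤ 2 * τ + 1) (hhi : 2 * τ ≤ N + 1) :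
    (v ^ (N - k) * (-u) ^ k) ^ 2 * (τ - k : ℕ) + (u ^ (N - k) * v ^ k) ^ 2 * (k - τ : ℕ) ≤
      N * v ^ (N + 1) := by
  have hbelow : (v ^ (N - k) * (-u) ^ k) ^ 2 * (τ - k : ℕ) ≤ v ^ (N + 1) * (τ - k : ℕ) := by
    rcases le_or_gt τ k with h | h
    · simp [Nat.sub_eq_zero_of_le h]
    · rw [mul_comm (v ^ (N - k))]
      gcongr
      exact sq_pow_mul_pow_le_pow (by rwa [neg_sq]) hv₀ hv₁ (by lia) k
  have habove : (u ^ (N - k) * v ^ k) ^ 2 * (k - τ : ℕ) ≤ v ^ (N + 1) * (k - τ : ℕ) := by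
    rcases le_or_gt k τ with h | h
    · simp [Nat.sub_eq_zero_of_le h]
    · gcongr
      exact sq_pow_mul_pow_le_pow hu hv₀ hv₁ (by lia) (N - k)
  have hdist : ((τ - k : ℕ) : K) + (k - τ : ℕ) ≤ N := mod_cast (by lia : τ - k + (k - τ) ≤ N)
  calc _ ≤ v ^ (N + 1) * (τ - k : ℕ) + v ^ (N + 1) * (k - τ : ℕ) := add_le_add hbelow habove
    _ = ((τ - k : ℕ) + (k - τ : ℕ)) * v ^ (N + 1) := by ring
    _ ≤ N * v ^ (N + 1) := by gcongr

end Interference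

section RingProgram

variable {ι : Type*} [Fintype ι] [DecidableEq ι]

/-- The constraints that the ring program with coefficients `![u, v]` and `![v, -u]` puts on the
anticlockwise part `p = q · acw` of a solution `q`: since the clockwise part is nonnegative, the
prescribed total becomes an upper bound. -/
structure IsAnticlockwisePart (u v : ℝ) (p : (ι → Fin 2) → ℝ) : Prop where
  nonneg (x : ι → Fin 2) : 0 ≤ p x
  le_half_sq (x : ι → Fin 2) : p x ≤ 1 / 2 * (∏ n, ![u, v] (x n) + ∏ n, ![v, -u] (x n)) ^ 2
  marginal (n : ι) (b : Fin 2) : ∑ x with x n = b, p x = ![u, v] b ^ 2 / 2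

namespace IsAnticlockwisePart

variable {u v : ℝ} {p : (ι → Fin 2) → ℝ}

theorem sum_sub_half_sq_mul_sub_hammingNorm_eq_zero [Nonempty ι] (h : IsAnticlockwisePart u v p)
    (huv : u ^ 2 + v ^ 2 = 1) (c : ℝ) :
    ∑ x, (p x - 1 / 2 * (∏ n, ![u, v] (x n)) ^ 2) * (c - hammingNorm x) = 0 := by
  refine sum_mul_sub_hammingNorm_eq_zero_of_marginal (fun n b => ?_) c
  have hprod : ∑ x : ι → Fin 2 with x n = b, (∏ m, ![u, v] (x m)) ^ 2 = ![u, v] b ^ 2 := by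
    simp only [← prod_pow]
    exact sum_prod_apply_filter_apply_eq (p := fun b => ![u, v] b ^ 2) (by simpa using huv) n b
  rw [sum_sub_distrib, ← mul_sum, hprod, h.marginal]
  ring

theorem sub_half_sq_mul_sub_hammingNorm_le (h : IsAnticlockwisePart u v p)
    (huv : u ^ 2 + v ^ 2 = 1) (hv : 0 ≤ v) {τ : ℕ} (hlo : Fintype.card ι ≤ 2 * τ + 1)
    (hhi : 2 * τ ≤ Fintype.card ι + 1) (x : ι → Fin 2) :
    (p x - 1 / 2 * (∏ n, ![u, v] (x n)) ^ 2) * (τ - hammingNorm x) ≤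
      (u * v) ^ Fintype.card ι * ((-1) ^ hammingNorm x * (τ - hammingNorm x : ℕ)) +
        Fintype.card ι * v ^ (Fintype.card ι + 1) / 2 := by
  have herror := sq_mul_tsub_add_sq_mul_tsub_le (u := u) (by nlinarith) hv (by nlinarith)
    (hammingNorm_le_card_fintype (x := x)) hlo hhi
  have hA := prod_apply_eq_pow_hammingNorm ![u, v] x
  have hB := prod_apply_eq_pow_hammingNorm ![v, -u] x
  simp only [Matrix.cons_val_zero, Matrix.cons_val_one] at hA hB
  rw [← hA, ← hB] at herror
  calc _ ≤ _ := sub_half_sq_mul_sub_le (h.nonneg x) (h.le_half_sq x) τ (hammingNorm x)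
    _ ≤ _ := by
      rw [prod_mul_prod_eq_pow_mul_neg_one_pow, mul_assoc]
      gcongr

theorem sum_cross_add_error_nonneg (h : IsAnticlockwisePart u v p) (huv : u ^ 2 + v ^ 2 = 1)
    (hv : 0 ≤ v) {θ : ℕ} (hι : 2 ≤ Fintype.card ι) (hlo : 2 * θ + 1 ≤ Fintype.card ι)
    (hhi : Fintype.card ι ≤ 2 * θ + 3) :
    0 ≤ (u * v) ^ Fintype.card ι * ((-1) ^ θ * (Fintype.card ι - 2).choose θ) +
      2 ^ Fintype.card ι * (Fintype.card ι * v ^ (Fintype.card ι + 1) / 2) := by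
  have : Nonempty ι := Fintype.card_pos_iff.1 (by lia)
  have hcross : ∑ x : ι → Fin 2, (-1 : ℝ) ^ hammingNorm x * (θ + 1 - hammingNorm x : ℕ) =
      (-1) ^ θ * (Fintype.card ι - 2).choose θ :=
    mod_cast sum_neg_one_pow_hammingNorm_mul_tsub hι θ
  calc 0 = ∑ x, (p x - 1 / 2 * (∏ n, ![u, v] (x n)) ^ 2) * ((θ + 1 : ℕ) - hammingNorm x) :=
        (h.sum_sub_half_sq_mul_sub_hammingNorm_eq_zero huv _).symm
    _ ≤ ∑ x : ι → Fin 2,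
        ((u * v) ^ Fintype.card ι * ((-1) ^ hammingNorm x * (θ + 1 - hammingNorm x : ℕ)) +
          Fintype.card ι * v ^ (Fintype.card ι + 1) / 2) :=
        sum_le_sum fun x _ =>
          h.sub_half_sq_mul_sub_hammingNorm_le huv hv (by lia) (by lia) x
    _ = _ := by
        rw [sum_add_distrib, ← mul_sum, hcross, sum_const, card_univ, Fintype.card_fun,
          Fintype.card_fin, nsmul_eq_mul, Nat.cast_pow, Nat.cast_ofNat]

theorem pow_card_le_of_odd (h : IsAnticlockwisePart u v p) (huv : u ^ 2 + v ^ 2 = 1)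
    (hu : 0 ≤ u) (hv : 0 < v) {θ : ℕ} (hθ : Odd θ) (hlo : 2 * θ + 1 ≤ Fintype.card ι)
    (hhi : Fintype.card ι ≤ 2 * θ + 3) :
    u ^ Fintype.card ι ≤ 2 ^ Fintype.card ι * Fintype.card ι / 2 * v := by
  have hθ₁ : 1 ≤ θ := hθ.pos
  have hchoose : (1 : ℝ) ≤ (Fintype.card ι - 2).choose θ :=
    mod_cast Nat.choose_pos (by lia : θ ≤ Fintype.card ι - 2)
  have hnonneg := h.sum_cross_add_error_nonneg huv hv.le (θ := θ) (by lia) hlo hhi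
  rw [hθ.neg_one_pow] at hnonneg
  refine le_of_mul_le_mul_right ?_ (pow_pos hv (Fintype.card ι))
  calc u ^ Fintype.card ι * v ^ Fintype.card ι = (u * v) ^ Fintype.card ι * 1 := by
        rw [mul_pow, mul_one]
    _ ≤ (u * v) ^ Fintype.card ι * (Fintype.card ι - 2).choose θ := by gcongr
    _ ≤ 2 ^ Fintype.card ι * (Fintype.card ι * v ^ (Fintype.card ι + 1) / 2) := by linarith
    _ = 2 ^ Fintype.card ι * Fintype.card ι / 2 * v * v ^ Fintype.card ι := by ring

end IsAnticlockwisePart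

end RingProgram

theorem exists_odd_near_half {N : ℕ} (hN : 3 ≤ N) (hpar : N % 2 = 1 ∨ 4 ∣ N) :
    ∃ θ, Odd θ ∧ 2 * θ + 1 ≤ N ∧ N ≤ 2 * θ + 3 :=
  ⟨2 * ((N - 3) / 4) + 1, odd_two_mul_add_one _, by lia, by lia⟩

theorem exists_pos_forall_mul_sqrt_one_sub_sq_lt_pow (C : ℝ) (N : ℕ) :
    ∃ ε > 0, ∀ u : ℝ, 1 - ε < u → u < 1 → 0 < u ∧ C * √(1 - u ^ 2) < u ^ N := by
  have hcont : Continuous fun u : ℝ => C * √(1 - u ^ 2) := by fun_prop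
  have hlt : ∀ᶠ u : ℝ in 𝓝 1, C * √(1 - u ^ 2) < u ^ N :=
    hcont.continuousAt.eventually_lt (continuous_pow N).continuousAt (by simp)
  obtain ⟨ε, hε, h⟩ := Metric.eventually_nhds_iff.1 ((lt_mem_nhds one_pos).and hlt)
  refine ⟨ε, hε, fun u hu hu₁ => h ?_⟩
  rw [Real.dist_eq, abs_lt]
  constructor <;> linarith

/-- infeasibility of the `N`-party ring linear program for `N` odd or
divisible by `4` and `u` close enough to `1`.  The token direction `cw` is encoded
by `true`, `acw` by `false`. -/
theorem stmt_18 (N : ℕ) (hN : 3 ≤ N) (hpar : N % 2 = 1 ∨ 4 ∣ N) :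
    ∃ ε > (0 : ℝ), ∀ u : ℝ, 1 - ε < u → u < 1 →
      ¬ ∃ q : (Fin N → Fin 2) → Bool → ℝ,
        (∀ i t, 0 ≤ q i t) ∧
        (∑ i, (q i true + q i false)) = 1 ∧
        (∀ i : Fin N → Fin 2,
          q i true + q i false = (1 / 2) * (∏ n, uco u (i n) + ∏ n, vco u (i n)) ^ 2) ∧
        (∀ (n : Fin N) (b : Fin 2),
          (∑ i : Fin N → Fin 2, if i n = b then q i true else 0) = (vco u b) ^ 2 / 2 ∧
          (∑ i : Fin N → Fin 2, if i n = b then q i false else 0) = (uco u b) ^ 2 / 2) := by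
  obtain ⟨θ, hθ, hlo, hhi⟩ := exists_odd_near_half hN hpar
  obtain ⟨ε, hε, hsmall⟩ := exists_pos_forall_mul_sqrt_one_sub_sq_lt_pow (2 ^ N * N / 2) N
  refine ⟨ε, hε, fun u hu hu₁ => ?_⟩
  rintro ⟨q, hq, -, htotal, hmarginal⟩
  obtain ⟨hu₀, hlt⟩ := hsmall u hu hu₁
  have hpos : 0 < 1 - u ^ 2 := by nlinarith
  have hacw : IsAnticlockwisePart u √(1 - u ^ 2) fun x => q x false :=
    { nonneg x := hq x false
      le_half_sq x := (le_add_of_nonneg_left (hq x true)).trans_eq (htotal x)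
      marginal n b := by rw [sum_filter]; exact (hmarginal n b).2 }
  have hle := hacw.pow_card_le_of_odd (by rw [Real.sq_sqrt hpos.le]; ring) hu₀.le
    (Real.sqrt_pos.2 hpos) hθ (by rwa [Fintype.card_fin]) (by rwa [Fintype.card_fin])
  rw [Fintype.card_fin] at hle
  exact hlt.not_ge hle
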